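/- For every n ≥ 2, the group K_n is generated by the 2n−2 elements α_{1n}, …, α_{n−1,n}, α_{n1}, …, α_{n,n−1}; that is, K_n equals the subgroup of PΣ_n generated by { α_{in}, α_{ni} : 1 ≤ i ≤ n−1 }. -/

import Mathlib

open FreeGroup

/-- The free group on `n` generators. -/
abbrev FG (n : ℕ) : Type := FreeGroup (Fin n)

/-- The pure symmetric automorphism group `PΣ_n`: automorphisms sending each
generator to a conjugate of itself. -/
def PSigmaAut (n : ℕ) : Subgroup (MulAut (FG n)) where
  carrier := {φ | ∀ i : Fin n, ∃ w : FG n, φ (of i) = w * of i * w⁻¹}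
  one_mem' := fun i => ⟨1, by simp⟩
  mul_mem' := by
    rintro φ ψ hφ hψ i
    obtain ⟨w, hw⟩ := hψ i
    obtain ⟨v, hv⟩ := hφ i
    refine ⟨φ w * v, ?_⟩
    simp only [MulAut.mul_apply, hw, _root_.map_mul, _root_.map_inv, hv, mul_inv_rev, mul_assoc]
  inv_mem' := by
    intro φ hφ i
    obtain ⟨w, hw⟩ := hφ i
    refine ⟨(φ⁻¹ w)⁻¹, ?_⟩
    refine φ.injective ?_
    simp only [MulAut.apply_inv_self, _root_.map_mul, _root_.map_inv, inv_inv, hw]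
    group

/-- The projection `F_n → F_{n-1}` sending `x_n ↦ 1` and `x_i ↦ x_i` for `i < n-1`. -/
def projHom (n : ℕ) : FG n →* FG (n - 1) :=
  FreeGroup.lift fun i => if h : (i : ℕ) < n - 1 then of (⟨i, h⟩ : Fin (n - 1)) else 1

/-- The inclusion `F_{n-1} → F_n`. -/
def castHom (n : ℕ) : FG (n - 1) →* FG n :=
  FreeGroup.lift fun i => of (Fin.castLE (Nat.sub_le n 1) i)

/-- The endomorphism of `F_{n-1}` induced by an automorphism of `F_n`. -/
def desc (n : ℕ) (φ : MulAut (FG n)) : FG (n - 1) →* FG (n - 1) :=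
  (projHom n).comp ((φ : FG n ≃* FG n).toMonoidHom.comp (castHom n))

lemma desc_proj {n : ℕ} {φ : MulAut (FG n)} (hφ : φ ∈ PSigmaAut n) (x : FG n) :
    desc n φ (projHom n x) = projHom n (φ x) := by
  have : (desc n φ).comp (projHom n) = (projHom n).comp (φ : FG n ≃* FG n).toMonoidHom := by
    apply FreeGroup.ext_hom
    intro i
    by_cases h : (i : ℕ) < n - 1
    · simp only [MonoidHom.comp_apply, projHom, FreeGroup.lift_apply_of, dif_pos h]
      simp only [desc, MonoidHom.comp_apply, castHom, FreeGroup.lift_apply_of]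
      congr 2
    · obtain ⟨w, hw⟩ := hφ i
      simp only [MonoidHom.comp_apply, projHom, FreeGroup.lift_apply_of, dif_neg h,
        MulEquiv.coe_toMonoidHom, hw, _root_.map_mul, _root_.map_inv, _root_.map_one]
      simp
  exact DFunLike.congr_fun this x

lemma desc_mul {n : ℕ} {φ : MulAut (FG n)} (hφ : φ ∈ PSigmaAut n) (ψ : MulAut (FG n)) :
    desc n (φ * ψ) = (desc n φ).comp (desc n ψ) := by
  apply FreeGroup.ext_hom
  intro i
  simp only [desc, MonoidHom.comp_apply, MulEquiv.coe_toMonoidHom, MulAut.mul_apply]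
  exact (desc_proj hφ _).symm

lemma desc_one (n : ℕ) : desc n 1 = MonoidHom.id (FG (n - 1)) := by
  apply FreeGroup.ext_hom
  intro i
  simp only [desc, MonoidHom.comp_apply, MulEquiv.coe_toMonoidHom, MulAut.one_apply,
    castHom, FreeGroup.lift_apply_of, projHom, MonoidHom.id_apply]
  rw [dif_pos (show ((Fin.castLE (Nat.sub_le n 1) i : Fin n) : ℕ) < n - 1 from i.isLt)]
  exact congrArg of (Fin.ext rfl)

/-- The automorphism of `F_{n-1}` induced by an element of `PΣ_n`. -/
def descAut (n : ℕ) (φ : PSigmaAut n) : MulAut (FG (n - 1)) :=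
  MonoidHom.toMulEquiv (desc n ↑φ) (desc n ↑(φ⁻¹))
    (by
      rw [← desc_mul (φ⁻¹).2 ↑φ]
      norm_num [desc_one])
    (by
      rw [← desc_mul φ.2 ↑(φ⁻¹)]
      norm_num [desc_one])

lemma descAut_mem (n : ℕ) (φ : PSigmaAut n) : descAut n φ ∈ PSigmaAut (n - 1) := by
  intro i
  obtain ⟨w, hw⟩ := φ.2 (Fin.castLE (Nat.sub_le n 1) i)
  refine ⟨projHom n w, ?_⟩
  have : descAut n φ (of i) = projHom n ((φ : MulAut (FG n)) (of (Fin.castLE (Nat.sub_le n 1) i))) := by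
    simp only [descAut, MonoidHom.toMulEquiv, MulEquiv.coe_mk, Equiv.coe_fn_mk, desc,
      MonoidHom.comp_apply, MulEquiv.coe_toMonoidHom, castHom, FreeGroup.lift_apply_of]
  rw [this, hw]
  simp only [_root_.map_mul, _root_.map_inv, projHom, FreeGroup.lift_apply_of]
  rw [dif_pos (show ((Fin.castLE (Nat.sub_le n 1) i : Fin n) : ℕ) < n - 1 from i.isLt)]
  congr 2

/-- The homomorphism `π_n : PΣ_n → PΣ_{n-1}` induced by killing the last generator. -/
def piHom (n : ℕ) : PSigmaAut n →* PSigmaAut (n - 1) :=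
  MonoidHom.mk' (fun φ => ⟨descAut n φ, descAut_mem n φ⟩)
    (by
      intro φ ψ
      refine Subtype.ext (MulEquiv.ext fun x => ?_)
      show desc n ↑(φ * ψ) x = (descAut n φ * descAut n ψ) x
      rw [MulAut.mul_apply]
      show _ = desc n ↑φ (desc n ↑ψ x)
      rw [Subgroup.coe_mul, desc_mul φ.2]
      rfl)

/-- The kernel `K_n` of `π_n : PΣ_n → PΣ_{n-1}`. -/
def Kn (n : ℕ) : Subgroup (PSigmaAut n) := (piHom n).ker

/-- The monoid hom underlying `α_{ij}`: sends `x_i ↦ x_j x_i x_j⁻¹` and fixes the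
other generators. -/
def alphaHom (n : ℕ) (i j : Fin n) : FG n →* FG n :=
  FreeGroup.lift fun r => if r = i then of j * of i * (of j)⁻¹ else of r

/-- The inverse of `alphaHom`. -/
def alphaInvHom (n : ℕ) (i j : Fin n) : FG n →* FG n :=
  FreeGroup.lift fun r => if r = i then (of j)⁻¹ * of i * of j else of r

/-- The McCool generator `α_{ij} ∈ Aut(F_n)`, sending `x_i ↦ x_j x_i x_j⁻¹` and fixing
the other generators (defined to be the identity if `i = j`). -/
def alphaAut (n : ℕ) (i j : Fin n) : MulAut (FG n) :=
  if h : i = j then 1 else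
    MonoidHom.toMulEquiv (alphaHom n i j) (alphaInvHom n i j)
      (by
        apply FreeGroup.ext_hom
        intro r
        by_cases hr : r = i
        · subst hr
          simp [alphaHom, alphaInvHom, Ne.symm h, mul_assoc]
        · simp [alphaHom, alphaInvHom, hr])
      (by
        apply FreeGroup.ext_hom
        intro r
        by_cases hr : r = i
        · subst hr
          simp [alphaHom, alphaInvHom, Ne.symm h, mul_assoc]
        · simp [alphaHom, alphaInvHom, hr])

lemma alphaAut_apply_of (n : ℕ) {i j : Fin n} (hij : i ≠ j) (r : Fin n) :
    alphaAut n i j (of r) = if r = i then of j * of i * (of j)⁻¹ else of r := by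
  simp only [alphaAut, dif_neg hij]
  show alphaHom n i j (of r) = _
  simp [alphaHom]

lemma alphaAut_mem (n : ℕ) (i j : Fin n) : alphaAut n i j ∈ PSigmaAut n := by
  by_cases h : i = j
  · simp only [alphaAut, dif_pos h]
    exact (PSigmaAut n).one_mem
  · intro r
    rw [alphaAut_apply_of n h r]
    by_cases hr : r = i
    · subst hr
      exact ⟨of j, by simp⟩
    · exact ⟨1, by simp [hr]⟩

/-- `α_{ij}` as an element of `PΣ_n`. -/
def alphaP (n : ℕ) (i j : Fin n) : PSigmaAut n := ⟨alphaAut n i j, alphaAut_mem n i j⟩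


lemma aux_split {β : Type*} : ∀ (V L : List β), ∃ p v l, V = p ++ v ∧ L = p ++ l ∧
    ∀ z ∈ v.head?, ∀ y ∈ l.head?, z ≠ y := by
  classical
  intro V
  induction V with
  | nil => intro L; exact ⟨[], [], L, by simp⟩
  | cons a V ih =>
    intro L
    cases L with
    | nil => exact ⟨[], a :: V, [], by simp⟩
    | cons b L =>
      by_cases h : a = b
      · subst h
        obtain ⟨p, v, l, h1, h2, h3⟩ := ih L
        exact ⟨a :: p, v, l, by simp [h1], by simp [h2], h3⟩
      · exact ⟨[], a :: V, b :: L, by simp [h]⟩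

lemma aux_pp {α : Type*} [DecidableEq α] (V L : List (α × Bool)) (a : α × Bool)
    (hL : IsReduced L) (hV : IsReduced (V ++ [a])) (hV' : IsReduced (V ++ [(a.1, !a.2)]))
    (hn : ¬ (V ++ [(a.1, !a.2)] <+: L)) :
    V ++ [a] <+: (FreeGroup.mk V * FreeGroup.mk [a] * (FreeGroup.mk V)⁻¹ * FreeGroup.mk L).toWord := by
  obtain ⟨p, v, l, h1, h2, h3⟩ := aux_split V L
  have key : FreeGroup.mk V * FreeGroup.mk [a] * (FreeGroup.mk V)⁻¹ * FreeGroup.mk L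
      = FreeGroup.mk ((V ++ [a]) ++ (invRev v ++ l)) := by
    have e1 : FreeGroup.mk L = FreeGroup.mk p * FreeGroup.mk l := by rw [h2, mul_mk]
    have e2 : (FreeGroup.mk V)⁻¹ = (FreeGroup.mk v)⁻¹ * (FreeGroup.mk p)⁻¹ := by
      rw [← mul_inv_rev, mul_mk, ← h1]
    rw [← mul_mk, ← mul_mk, ← mul_mk, ← inv_mk, e1, e2]
    group
  have hv : IsReduced v := by
    have : IsReduced V := (List.isChain_append.1 hV).1
    rw [h1] at this
    exact (List.isChain_append.1 this).2.1
  have hl : IsReduced l := by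
    rw [h2] at hL
    exact (List.isChain_append.1 hL).2.1
  have hiv : IsReduced (invRev v) := by
    rw [isReduced_iff_reduce_eq, reduce_invRev, isReduced_iff_reduce_eq.1 hv]
  have h4 : IsReduced (invRev v ++ l) := by
    refine List.isChain_append.2 ⟨hiv, hl, ?_⟩
    intro x hx y hy hxy
    cases v with
    | nil => simp [invRev] at hx
    | cons z v =>
      simp [invRev] at hx
      have := h3 z (by simp) y hy
      subst hx
      obtain ⟨z1, z2⟩ := z
      obtain ⟨y1, y2⟩ := y
      simp at hxy this ⊢
      have := this hxy
      cases z2 <;> cases y2 <;> simp_all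
  have h5 : IsReduced ((V ++ [a]) ++ (invRev v ++ l)) := by
    refine List.isChain_append.2 ⟨hV, h4, ?_⟩
    intro x hx y hy hxy
    simp at hx
    subst hx
    rcases List.eq_nil_or_concat v with rfl | ⟨v', z, rfl⟩
    · simp [invRev] at hy
      by_contra hne
      apply hn
      cases l with
      | nil => simp at hy
      | cons b l =>
        simp at hy
        subst hy
        have : b = (a.1, !a.2) := by
          obtain ⟨a1, a2⟩ := a
          obtain ⟨b1, b2⟩ := b
          simp at hxy hne ⊢
          refine ⟨hxy.symm, ?_⟩
          cases a2 <;> cases b2 <;> simp_all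
        refine ⟨l, ?_⟩
        rw [h2, h1, ← this]
        simp
    · simp [invRev] at hy
      subst hy
      have q1 := (List.isChain_append.1 hV).2.2 z (by rw [h1]; simp) a (by simp)
      have q2 := (List.isChain_append.1 hV').2.2 z (by rw [h1]; simp) _ (by simp; rfl)
      simp at q1 q2 hxy
      have := q1 hxy.symm
      have := q2 hxy.symm
      simp_all
  rw [key, toWord_mk, isReduced_iff_reduce_eq.1 h5]
  exact List.prefix_append _ _

lemma aux_letter {α : Type*} (a : α) (b : Bool) :
    FreeGroup.mk [(a, !b)] = (FreeGroup.mk [(a, b)])⁻¹ := by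
  simp [inv_mk, invRev]

lemma aux_red {α : Type*} [DecidableEq α] (w : FreeGroup α) (a : α × Bool)
    (h : norm w ≤ norm (w * FreeGroup.mk [a])) : IsReduced (w.toWord ++ [a]) := by
  refine List.isChain_append.2 ⟨isReduced_toWord, by simp, ?_⟩
  intro x hx y hy hxy
  simp at hy
  subst hy
  by_contra hne
  rcases List.eq_nil_or_concat w.toWord with h0 | ⟨v, z, h0⟩
  · simp [h0] at hx
  · simp [h0] at hx
    subst hx
    obtain ⟨a1, a2⟩ := a
    obtain ⟨z1, z2⟩ := z
    simp at hxy hne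
    subst hxy
    have hz : z2 = !a2 := by cases z2 <;> cases a2 <;> simp_all
    subst hz
    have hw : w = FreeGroup.mk v * FreeGroup.mk [(z1, !a2)] := by
      rw [mul_mk, ← mk_toWord (x := w), h0, List.concat_eq_append]
    have h2 : w * FreeGroup.mk [(z1, a2)] = FreeGroup.mk v := by
      rw [hw, aux_letter]; group
    have h3 : norm w = v.length + 1 := by simp [FreeGroup.norm, h0]
    have h4 : norm (FreeGroup.mk v) ≤ v.length := norm_mk_le
    rw [h2] at h
    omega

lemma aux_not_prefix {α : Type*} [DecidableEq α] (u w : FreeGroup α) (a : α × Bool)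
    (h : norm w ≤ norm (u * (FreeGroup.mk [a])⁻¹ * u⁻¹ * w)) :
    ¬ (u.toWord ++ [a] <+: w.toWord) := by
  rintro ⟨t, ht⟩
  have hw : w = u * FreeGroup.mk [a] * FreeGroup.mk t := by
    rw [← mk_toWord (x := w), ← ht, ← mul_mk, ← mul_mk, mk_toWord]
  have h2 : u * (FreeGroup.mk [a])⁻¹ * u⁻¹ * w = u * FreeGroup.mk t := by
    rw [hw]; group
  have h3 : norm w = norm u + 1 + t.length := by simp [FreeGroup.norm, ← ht]; ring
  have h4 := norm_mul_le u (FreeGroup.mk t)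
  have h5 : norm (FreeGroup.mk t) ≤ t.length := norm_mk_le
  rw [h2] at h
  omega

lemma aux_main {α : Type*} [DecidableEq α] (φ : FreeGroup α →* FreeGroup α) (W : α → FreeGroup α)
    (hφ : ∀ a b, φ (FreeGroup.mk [(a, b)]) = W a * FreeGroup.mk [(a, b)] * (W a)⁻¹)
    (h1 : ∀ a b, IsReduced ((W a).toWord ++ [(a, b)]))
    (h2 : ∀ i j b, i ≠ j → ¬ ((W j).toWord ++ [(j, b)] <+: (W i).toWord)) :
    ∀ (T : List (α × Bool)) (i : α) (b : Bool), IsReduced ((i, b) :: T) →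
      (W i).toWord ++ [(i, b)] <+: (φ (FreeGroup.mk ((i, b) :: T))).toWord := by
  intro T
  induction T with
  | nil =>
    intro i b _
    have := aux_pp (W i).toWord [] (i, b) (by simp) (h1 _ _) (h1 _ _) (by simp)
    rw [hφ]
    simpa [mk_toWord, ← one_eq_mk] using this
  | cons c T ih =>
    intro i b hT
    obtain ⟨j, f⟩ := c
    rw [isReduced_cons_cons] at hT
    obtain ⟨hT1, hT2⟩ := hT
    have hp := ih j f hT2
    have := aux_pp (W i).toWord (φ (FreeGroup.mk ((j, f) :: T))).toWord (i, b)
      isReduced_toWord (h1 _ _) (h1 _ _) ?_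
    · have e : FreeGroup.mk ((i, b) :: (j, f) :: T)
        = FreeGroup.mk [(i, b)] * FreeGroup.mk ((j, f) :: T) := by rw [mul_mk]; rfl
      rw [e, _root_.map_mul, hφ]
      simpa [mk_toWord] using this
    · intro hq
      have key : ∀ (i j : α) (b f : Bool) (L : List (α × Bool)),
          (W i).toWord ++ [(i, b)] <+: L → (W j).toWord ++ [(j, f)] <+: L →
          ((W i).toWord ++ [(i, b)]).length ≤ ((W j).toWord ++ [(j, f)]).length →
          (i, b) = (j, f) := by
        intro i j b f L ha hb hl
        have hc := List.prefix_of_prefix_length_le ha hb hl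
        rcases List.prefix_concat_iff.1 hc with hd | hd
        · exact List.append_inj_right' hd rfl |> fun h => by simpa using h
        · by_cases hij : j = i
          · subst hij
            have := hd.length_le
            simp at this
          · exact absurd hd (h2 _ _ _ hij)
      have : (i, !b) = (j, f) := by
        rcases le_total ((W i).toWord ++ [(i, !b)]).length ((W j).toWord ++ [(j, f)]).length with h | h
        · exact key _ _ _ _ _ hq hp h
        · exact (key _ _ _ _ _ hp hq h).symm
      simp at this
      have h3 := hT1 this.1
      simp at h3
      have h4 := this.2
      rw [h3] at h4
      simp at h4

lemma aux_triv {α : Type*} [DecidableEq α] (φ : MulAut (FreeGroup α)) (W : α → FreeGroup α)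
    (hφ : ∀ a, φ (of a) = W a * of a * (W a)⁻¹)
    (h1 : ∀ a b, norm (W a) ≤ norm (W a * FreeGroup.mk [(a, b)]))
    (h2 : ∀ i j b, i ≠ j → norm (W i) ≤ norm (W j * (FreeGroup.mk [(j, b)])⁻¹ * (W j)⁻¹ * W i)) :
    φ = 1 := by
  have hφ' : ∀ a b, φ.toMonoidHom (FreeGroup.mk [(a, b)]) = W a * FreeGroup.mk [(a, b)] * (W a)⁻¹ := by
    intro a b
    cases b
    · have : FreeGroup.mk [(a, false)] = (of a)⁻¹ := aux_letter a true
      simp only [MulEquiv.coe_toMonoidHom, this, _root_.map_inv, hφ]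
      group
    · exact hφ a
  have hW : ∀ k, W k = 1 := by
    intro k
    have hne : (φ⁻¹ (of k)).toWord ≠ [] := by
      simp
    obtain ⟨⟨i, b⟩, T, hT⟩ := List.exists_cons_of_ne_nil hne
    have := aux_main φ.toMonoidHom W hφ' (fun a b => aux_red _ _ (h1 a b))
      (fun i j b hij => aux_not_prefix _ _ _ (h2 i j b hij)) T i b (hT ▸ isReduced_toWord)
    rw [← hT, mk_toWord] at this
    simp only [MulEquiv.coe_toMonoidHom, MulAut.apply_inv_self, toWord_of] at this
    have hl := this.length_le
    simp at hl
    simp [hl] at this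
    rw [← this.1]; exact hl
  apply MulEquiv.toMonoidHom_injective
  apply FreeGroup.ext_hom
  intro a
  simp [hφ, hW]

lemma aut_ext {n : ℕ} {φ ψ : MulAut (FG n)} (h : ∀ r, φ (of r) = ψ (of r)) : φ = ψ := by
  apply MulEquiv.toMonoidHom_injective
  apply FreeGroup.ext_hom
  intro a
  simpa using h a

lemma alphaAut_inv_apply_of (n : ℕ) {i j : Fin n} (hij : i ≠ j) (r : Fin n) :
    (alphaAut n i j)⁻¹ (of r) = if r = i then (of j)⁻¹ * of i * of j else of r := by
  apply (alphaAut n i j).injective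
  rw [MulAut.apply_inv_self]
  by_cases h : r = i
  · subst h
    simp only [if_true, _root_.map_mul, _root_.map_inv, alphaAut_apply_of n hij, hij.symm, if_false]
    group
  · simp [h, alphaAut_apply_of n hij]

def genSet (n : ℕ) : Set (MulAut (FG n)) := {g | ∃ i j, i ≠ j ∧ g = alphaAut n i j}

lemma aux_gamma (n : ℕ) {i j : Fin n} (hij : i ≠ j) (b : Bool) :
    ∃ γ ∈ Subgroup.closure (genSet n), ∀ r, γ (of r) =
      if r = i then (FreeGroup.mk [(j, b)])⁻¹ * of i * FreeGroup.mk [(j, b)] else of r := by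
  have hm : alphaAut n i j ∈ Subgroup.closure (genSet n) :=
    Subgroup.subset_closure ⟨i, j, hij, rfl⟩
  cases b
  · refine ⟨_, hm, fun r => ?_⟩
    have : FreeGroup.mk [(j, false)] = (of j)⁻¹ := aux_letter j true
    rw [alphaAut_apply_of n hij, this, inv_inv]
  · exact ⟨_, inv_mem hm, fun r => alphaAut_inv_apply_of n hij r⟩

lemma aux_gen (n : ℕ) : ∀ (N : ℕ) (φ : MulAut (FG n)) (W : Fin n → FG n),
    (∀ i, φ (of i) = W i * of i * (W i)⁻¹) → ∑ i, FreeGroup.norm (W i) = N →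
    φ ∈ Subgroup.closure (genSet n) := by
  intro N
  induction N using Nat.strong_induction_on with
  | _ N ih =>
  intro φ W hφ hN
  have upd : ∀ i w, FreeGroup.norm w < FreeGroup.norm (W i) →
      ∑ k, FreeGroup.norm (Function.update W i w k) < N := by
    intro i w hw
    rw [← hN]
    apply Finset.sum_lt_sum
    · intro k _
      by_cases hk : k = i
      · subst hk; simp [hw.le]
      · simp [hk]
    · exact ⟨i, Finset.mem_univ _, by simpa using hw⟩
  by_cases h1 : ∀ a b, FreeGroup.norm (W a) ≤ FreeGroup.norm (W a * FreeGroup.mk [(a, b)])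
  · by_cases h2 : ∀ i j b, i ≠ j → FreeGroup.norm (W i) ≤
        FreeGroup.norm (W j * (FreeGroup.mk [(j, b)])⁻¹ * (W j)⁻¹ * W i)
    · rw [aux_triv φ W hφ h1 h2]
      exact one_mem _
    · push Not at h2
      obtain ⟨i, j, b, hij, hlt⟩ := h2
      obtain ⟨γ, hγ, hγr⟩ := aux_gamma n hij b
      have hφj : φ (FreeGroup.mk [(j, b)]) = W j * FreeGroup.mk [(j, b)] * (W j)⁻¹ := by
        cases b
        · have : FreeGroup.mk [(j, false)] = (of j)⁻¹ := aux_letter j true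
          rw [this, _root_.map_inv, hφ]
          group
        · exact hφ j
      have := ih _ (upd i _ hlt) (φ * γ) (Function.update W i _) ?_ rfl
      · have h3 := mul_mem this (inv_mem hγ)
        simpa using h3
      · intro r
        rw [MulAut.mul_apply, hγr]
        by_cases hr : r = i
        · subst hr
          simp only [if_true, Function.update_self, _root_.map_mul, _root_.map_inv, hφj, hφ]
          group
        · simp [hr, hφ]
  · push Not at h1
    obtain ⟨a, b, hlt⟩ := h1
    refine ih _ (upd a _ hlt) φ (Function.update W a _) ?_ rfl
    intro r
    by_cases hr : r = a
    · subst hr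
      rw [Function.update_self, hφ]
      cases b
      · have : FreeGroup.mk [(r, false)] = (of r)⁻¹ := aux_letter r true
        rw [this]; group
      · have : FreeGroup.mk [(r, true)] = of r := rfl
        rw [this]; group
    · simp [hr, hφ]

lemma PSigma_le (n : ℕ) : PSigmaAut n ≤ Subgroup.closure (genSet n) := by
  intro φ hφ
  choose W hW using hφ
  exact aux_gen n _ φ W hW rfl

def lastSet (n : ℕ) (m : Fin n) : Set (MulAut (FG n)) :=
  {g | ∃ i, i ≠ m ∧ (g = alphaAut n i m ∨ g = alphaAut n m i)}

def restSet (n : ℕ) (m : Fin n) : Set (MulAut (FG n)) :=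
  {g | ∃ i j, i ≠ j ∧ i ≠ m ∧ j ≠ m ∧ g = alphaAut n i j}

-- relations
lemma rel_comm4 (n : ℕ) {i j k l : Fin n} (hij : i ≠ j) (hkl : k ≠ l) (hik : i ≠ k)
    (hil : i ≠ l) (hjk : j ≠ k) :
    alphaAut n i j * alphaAut n k l = alphaAut n k l * alphaAut n i j := by
  apply aut_ext
  intro r
  simp only [MulAut.mul_apply, alphaAut_apply_of n hij, alphaAut_apply_of n hkl]
  by_cases h1 : r = i
  · subst h1
    simp [alphaAut_apply_of n hij, alphaAut_apply_of n hkl, hik, hjk]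
  · by_cases h2 : r = k
    · subst h2
      simp [alphaAut_apply_of n hij, alphaAut_apply_of n hkl, h1, hil.symm]
    · simp [alphaAut_apply_of n hij, alphaAut_apply_of n hkl, h1, h2]

lemma rel_tri (n : ℕ) {i j k : Fin n} (hij : i ≠ j) (hik : i ≠ k) (hjk : j ≠ k) :
    alphaAut n i j * (alphaAut n i k * alphaAut n j k)
      = (alphaAut n i k * alphaAut n j k) * alphaAut n i j := by
  apply aut_ext
  intro r
  simp only [MulAut.mul_apply, alphaAut_apply_of n hij, alphaAut_apply_of n hik,
    alphaAut_apply_of n hjk]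
  by_cases h1 : r = i
  · subst h1
    simp [alphaAut_apply_of n hij, alphaAut_apply_of n hik,
      alphaAut_apply_of n hjk, hij, hij.symm, hik.symm, hjk.symm, mul_assoc]
  · by_cases h2 : r = j
    · subst h2
      simp [alphaAut_apply_of n hij, alphaAut_apply_of n hik,
        alphaAut_apply_of n hjk, hij, hij.symm, hik.symm, hjk.symm, mul_assoc]
    · simp [alphaAut_apply_of n hij, alphaAut_apply_of n hik,
        alphaAut_apply_of n hjk, h1, h2]

lemma conj_mem (n : ℕ) (m : Fin n) {i j : Fin n} (hij : i ≠ j) (him : i ≠ m) (hjm : j ≠ m) :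
    ∀ g ∈ lastSet n m,
      alphaAut n i j * g * (alphaAut n i j)⁻¹ ∈ Subgroup.closure (lastSet n m) ∧
      (alphaAut n i j)⁻¹ * g * alphaAut n i j ∈ Subgroup.closure (lastSet n m) := by
  have m1 : ∀ k, k ≠ m → alphaAut n k m ∈ Subgroup.closure (lastSet n m) :=
    fun k hk => Subgroup.subset_closure ⟨k, hk, Or.inl rfl⟩
  have m2 : ∀ k, k ≠ m → alphaAut n m k ∈ Subgroup.closure (lastSet n m) :=
    fun k hk => Subgroup.subset_closure ⟨k, hk, Or.inr rfl⟩
  -- abstract facts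
  have comm : ∀ {G : Type} [Group G] (a g : G), a * g = g * a →
      a * g * a⁻¹ = g ∧ a⁻¹ * g * a = g := by
    intro G _ a g h
    exact ⟨by rw [h]; group, by rw [mul_assoc, ← h]; group⟩
  have tri : ∀ {G : Type} [Group G] (a b g : G), g * (a * b) = (a * b) * g → a * b = b * a →
      a * g * a⁻¹ = b⁻¹ * g * b ∧ a⁻¹ * g * a = b * g * b⁻¹ := by
    intro G _ a b g h hc
    constructor
    · have : a * g = b⁻¹ * (g * (a * b)) := by
        rw [h, hc]; group
      rw [this, hc]; group
    · have h' : g * a = (a * b) * g * b⁻¹ := by rw [← h]; group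
      rw [mul_assoc, h']; group
  have A1 : alphaAut n i j * alphaAut n i m * (alphaAut n i j)⁻¹ ∈ Subgroup.closure (lastSet n m) ∧
      (alphaAut n i j)⁻¹ * alphaAut n i m * alphaAut n i j ∈ Subgroup.closure (lastSet n m) := by
    obtain ⟨e1, e2⟩ := tri _ _ _ (rel_tri n him hij hjm.symm)
      (rel_comm4 n hij hjm.symm him hij hjm)
    rw [e1, e2]
    exact ⟨mul_mem (mul_mem (inv_mem (m2 j hjm)) (m1 i him)) (m2 j hjm),
      mul_mem (mul_mem (m2 j hjm) (m1 i him)) (inv_mem (m2 j hjm))⟩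
  have comm' : ∀ g ∈ Subgroup.closure (lastSet n m),
      alphaAut n i j * g = g * alphaAut n i j →
      alphaAut n i j * g * (alphaAut n i j)⁻¹ ∈ Subgroup.closure (lastSet n m) ∧
      (alphaAut n i j)⁻¹ * g * alphaAut n i j ∈ Subgroup.closure (lastSet n m) := by
    intro g hg h
    obtain ⟨e1, e2⟩ := comm _ _ h
    rw [e1, e2]; exact ⟨hg, hg⟩
  rintro g ⟨k, hk, rfl | rfl⟩
  · by_cases hki : k = i
    · subst hki; exact A1
    · by_cases hkj : k = j
      · subst hkj
        have B := comm' _ (mul_mem (m1 i him) (m1 k hk)) (rel_tri n hij him hjm)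
        constructor
        · have := mul_mem (inv_mem A1.1) B.1
          convert this using 1
          group
        · have := mul_mem (inv_mem A1.2) B.2
          convert this using 1
          group
      · exact comm' _ (m1 k hk) (rel_comm4 n hij hk (Ne.symm hki) him (Ne.symm hkj))
  · by_cases hki : k = i
    · subst hki
      obtain ⟨e1, e2⟩ := tri (alphaAut n k j) (alphaAut n m j) (alphaAut n m k) (by
          have := rel_tri n hk.symm hjm.symm hij
          rwa [rel_comm4 n hjm.symm hij hk.symm hjm.symm (Ne.symm hij)] at this)
        (rel_comm4 n hij hjm.symm hk hij hjm)
      rw [e1, e2]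
      exact ⟨mul_mem (mul_mem (inv_mem (m2 j hjm)) (m2 k hk)) (m2 j hjm),
        mul_mem (mul_mem (m2 j hjm) (m2 k hk)) (inv_mem (m2 j hjm))⟩
    · exact comm' _ (m2 k hk) (rel_comm4 n hij hk.symm him (Ne.symm hki) hjm)

lemma rest_le_normalizer (n : ℕ) (m : Fin n) :
    ∀ s ∈ Subgroup.closure (restSet n m), ∀ g ∈ Subgroup.closure (lastSet n m),
      s * g * s⁻¹ ∈ Subgroup.closure (lastSet n m) := by
  intro s hs
  have ext : ∀ t : MulAut (FG n), (∀ g ∈ lastSet n m, t * g * t⁻¹ ∈ Subgroup.closure (lastSet n m)) →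
      ∀ g ∈ Subgroup.closure (lastSet n m), t * g * t⁻¹ ∈ Subgroup.closure (lastSet n m) := by
    intro t ht g hg
    have : Subgroup.closure (lastSet n m) ≤
        (Subgroup.closure (lastSet n m)).comap (MulAut.conj t).toMonoidHom := by
      rw [Subgroup.closure_le]
      intro x hx
      exact ht x hx
    exact this hg
  induction hs using Subgroup.closure_induction'' with
  | mem x hx =>
    obtain ⟨i, j, hij, him, hjm, rfl⟩ := hx
    exact ext _ fun g hg => (conj_mem n m hij him hjm g hg).1
  | inv_mem x hx =>
    obtain ⟨i, j, hij, him, hjm, rfl⟩ := hx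
    exact ext _ fun g hg => by simpa using (conj_mem n m hij him hjm g hg).2
  | one => intro g hg; simpa using hg
  | mul x y _ _ hx hy =>
    intro g hg
    have := hx _ (hy g hg)
    convert this using 1
    group

lemma decomp (n : ℕ) (m : Fin n) (φ : MulAut (FG n)) (hφ : φ ∈ PSigmaAut n) :
    ∃ l ∈ Subgroup.closure (lastSet n m), ∃ s ∈ Subgroup.closure (restSet n m), φ = l * s := by
  have h := PSigma_le n hφ
  have hgen : ∀ x ∈ genSet n, x ∈ Subgroup.closure (lastSet n m) ∨
      x ∈ Subgroup.closure (restSet n m) := by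
    rintro x ⟨i, j, hij, rfl⟩
    by_cases hi : i = m
    · subst hi
      exact Or.inl (Subgroup.subset_closure ⟨j, hij.symm, Or.inr rfl⟩)
    · by_cases hj : j = m
      · subst hj
        exact Or.inl (Subgroup.subset_closure ⟨i, hij, Or.inl rfl⟩)
      · exact Or.inr (Subgroup.subset_closure ⟨i, j, hij, hi, hj, rfl⟩)
  have step : ∀ x y : MulAut (FG n), (x ∈ Subgroup.closure (lastSet n m) ∨
      x ∈ Subgroup.closure (restSet n m)) →
      (∃ l ∈ Subgroup.closure (lastSet n m), ∃ s ∈ Subgroup.closure (restSet n m), y = l * s) →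
      ∃ l ∈ Subgroup.closure (lastSet n m), ∃ s ∈ Subgroup.closure (restSet n m), x * y = l * s := by
    rintro x y (hx | hx) ⟨l, hl, s, hs, rfl⟩
    · exact ⟨x * l, mul_mem hx hl, s, hs, by group⟩
    · exact ⟨x * l * x⁻¹, rest_le_normalizer n m x hx l hl, x * s, mul_mem hx hs, by group⟩
  clear hφ
  induction h using Subgroup.closure_induction_left with
  | one => exact ⟨1, one_mem _, 1, one_mem _, by simp⟩
  | mul_left x hx y _ ih => exact step x y (hgen x hx) ih
  | inv_mul_cancel x hx y _ ih =>
    exact step x⁻¹ y ((hgen x hx).imp (fun h => inv_mem h) (fun h => inv_mem h)) ih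

lemma projHom_of_ne (n : ℕ) (i : Fin n) (h : (i : ℕ) < n - 1) :
    projHom n (of i) = of ⟨i, h⟩ := by
  simp [projHom, h]

lemma projHom_of_last (n : ℕ) (i : Fin n) (h : ¬ (i : ℕ) < n - 1) :
    projHom n (of i) = 1 := by
  simp [projHom, h]

lemma last_proj (n : ℕ) (m : Fin n) (hm : (m : ℕ) = n - 1) (l : MulAut (FG n))
    (hl : l ∈ Subgroup.closure (lastSet n m)) : ∀ x, projHom n (l x) = projHom n x := by
  have pm : projHom n (of m) = 1 := projHom_of_last n m (by omega)
  induction hl using Subgroup.closure_induction with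
  | mem x hx =>
    have aux : ∀ g : MulAut (FG n), (∀ r, projHom n (g (of r)) = projHom n (of r)) →
        ∀ x, projHom n (g x) = projHom n x := by
      intro g hg x
      have : (projHom n).comp g.toMonoidHom = projHom n := by
        apply FreeGroup.ext_hom
        intro r
        simpa using hg r
      exact DFunLike.congr_fun this x
    apply aux
    obtain ⟨i, hi, rfl | rfl⟩ := hx
    · intro r
      rw [alphaAut_apply_of n hi]
      split_ifs with h
      · subst h; simp [pm]
      · rfl
    · intro r
      rw [alphaAut_apply_of n hi.symm]
      split_ifs with h
      · subst h; simp [pm]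
      · rfl
  | one => simp
  | mul x y _ _ hx hy => intro z; rw [MulAut.mul_apply, hx, hy]
  | inv x _ hx => intro z; rw [← hx, MulAut.apply_inv_self]

lemma rest_ret (n : ℕ) (m : Fin n) (hm : (m : ℕ) = n - 1) (s : MulAut (FG n))
    (hs : s ∈ Subgroup.closure (restSet n m)) :
    s (of m) = of m ∧ ∀ x, s (castHom n (projHom n x)) = castHom n (projHom n (s x)) := by
  have pm : projHom n (of m) = 1 := projHom_of_last n m (by omega)
  have pi : ∀ i : Fin n, i ≠ m → castHom n (projHom n (of i)) = of i := by
    intro i hi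
    have : (i : ℕ) ≠ m := fun h => hi (Fin.ext h)
    rw [projHom_of_ne n i (by omega)]
    simp [castHom]
  induction hs using Subgroup.closure_induction with
  | mem x hx =>
    obtain ⟨i, j, hij, him, hjm, rfl⟩ := hx
    refine ⟨by rw [alphaAut_apply_of n hij, if_neg him.symm], fun x => ?_⟩
    have : (alphaAut n i j).toMonoidHom.comp ((castHom n).comp (projHom n)) =
        ((castHom n).comp (projHom n)).comp (alphaAut n i j).toMonoidHom := by
      apply FreeGroup.ext_hom
      intro r
      simp only [MonoidHom.comp_apply, MulEquiv.coe_toMonoidHom]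
      by_cases hr : r = m
      · subst hr
        rw [alphaAut_apply_of n hij, if_neg him.symm, pm]
        simp
      · rw [pi r hr, alphaAut_apply_of n hij]
        split_ifs with h
        · simp [pi i him, pi j hjm]
        · rw [pi r hr]
    exact DFunLike.congr_fun this x
  | one => simp
  | mul x y _ _ hx hy =>
    exact ⟨by rw [MulAut.mul_apply, hy.1, hx.1], fun z => by
      rw [MulAut.mul_apply, MulAut.mul_apply, hy.2, hx.2]⟩
  | inv x _ hx =>
    refine ⟨x.injective ?_, fun z => x.injective ?_⟩
    · rw [MulAut.apply_inv_self, hx.1]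
    · rw [MulAut.apply_inv_self, hx.2, MulAut.apply_inv_self]

lemma mem_Kn_iff (n : ℕ) (φ : PSigmaAut n) :
    φ ∈ Kn n ↔ desc n φ = MonoidHom.id _ := by
  rw [Kn, MonoidHom.mem_ker]
  constructor
  · intro h
    have h2 : descAut n φ = 1 := congrArg Subtype.val h
    ext1 x
    exact DFunLike.congr_fun h2 (of x)
  · intro h
    refine Subtype.ext (MulEquiv.ext fun x => ?_)
    exact DFunLike.congr_fun h x

lemma Kn_le (n : ℕ) (m : Fin n) (hm : (m : ℕ) = n - 1) (φ : PSigmaAut n) (h : φ ∈ Kn n) :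
    (φ : MulAut (FG n)) ∈ Subgroup.closure (lastSet n m) := by
  rw [mem_Kn_iff] at h
  obtain ⟨l, hl, s, hs, e⟩ := decomp n m φ φ.2
  have hs1 : s = 1 := by
    apply aut_ext
    intro r
    obtain ⟨r1, r2⟩ := rest_ret n m hm s hs
    by_cases hr : r = m
    · subst hr; simp [r1]
    · have : (r : ℕ) ≠ m := fun h => hr (Fin.ext h)
      have hlt : (r : ℕ) < n - 1 := by omega
      have h1 : castHom n (of ⟨r, hlt⟩) = of r := by simp [castHom]
      have h2 := r2 (of r)
      rw [projHom_of_ne n r hlt, h1] at h2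
      have h3 := DFunLike.congr_fun h (of ⟨r, hlt⟩)
      simp only [desc, MonoidHom.comp_apply, MulEquiv.coe_toMonoidHom, h1, MonoidHom.id_apply, e,
        MulAut.mul_apply, last_proj n m hm l hl] at h3
      rw [h2, h3, h1]; rfl
  rw [e, hs1, mul_one]
  exact hl

/-- STATEMENT 5: For every `n ≥ 2`, `K_n` is generated by the `2n - 2` elements
`α_{1n}, …, α_{n-1,n}, α_{n1}, …, α_{n,n-1}`. -/
theorem statement5 (n : ℕ) (hn : 2 ≤ n) :
    Kn n = Subgroup.closure {g : PSigmaAut n |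
      ∃ i : Fin (n - 1),
        g = alphaP n (Fin.castLE (Nat.sub_le n 1) i) ⟨n - 1, by omega⟩ ∨
          g = alphaP n ⟨n - 1, by omega⟩ (Fin.castLE (Nat.sub_le n 1) i)} := by
  set S := {g : PSigmaAut n |
      ∃ i : Fin (n - 1),
        g = alphaP n (Fin.castLE (Nat.sub_le n 1) i) ⟨n - 1, by omega⟩ ∨
          g = alphaP n ⟨n - 1, by omega⟩ (Fin.castLE (Nat.sub_le n 1) i)} with hS
  have key : (PSigmaAut n).subtype '' S = lastSet n ⟨n - 1, by omega⟩ := by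
    ext g
    constructor
    · rintro ⟨_, ⟨i, rfl | rfl⟩, rfl⟩
      · exact ⟨_, fun h => absurd (congrArg Fin.val h) (by simpa using i.2.ne), Or.inl rfl⟩
      · exact ⟨_, fun h => absurd (congrArg Fin.val h) (by simpa using i.2.ne), Or.inr rfl⟩
    · rintro ⟨i, hi, h⟩
      have hne : (i : ℕ) ≠ n - 1 := fun h => hi (Fin.ext h)
      have hlt : (i : ℕ) < n - 1 := by omega
      rcases h with rfl | rfl
      · exact ⟨_, ⟨⟨i, hlt⟩, Or.inl rfl⟩, rfl⟩
      · exact ⟨_, ⟨⟨i, hlt⟩, Or.inr rfl⟩, rfl⟩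
  apply le_antisymm
  · intro φ hφ
    have := Kn_le n ⟨n - 1, by omega⟩ rfl φ hφ
    rw [← key, ← MonoidHom.map_closure] at this
    obtain ⟨ψ, hψ, e⟩ := this
    have : ψ = φ := Subtype.ext e
    exact this ▸ hψ
  · rw [Subgroup.closure_le]
    intro g hg
    have hl := last_proj n ⟨n - 1, by omega⟩ rfl g
      (Subgroup.subset_closure (by rw [← key]; exact ⟨g, hg, rfl⟩))
    rw [SetLike.mem_coe, mem_Kn_iff, ← desc_one n]
    ext1 x
    simp only [desc, MonoidHom.comp_apply, MulEquiv.coe_toMonoidHom, hl, MulAut.one_apply]
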